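/- Let A, B, C ∈ ℝ² be affinely independent and let |T| denote the area of the triangle T with vertices A, B, C. Then there exist constants c₂ > 0 and c₃ > 0, depending only on A, B, C, such that for all values u(A), u(B), u(C) ∈ ℝ²: (‖u(A)−u(B)‖ − ‖A−B‖)² + (‖u(B)−u(C)‖ − ‖B−C‖)² ≥ c₂ ‖∇u‖² · |T| − c₃ |T|, where ∇u = (u(A)−u(B) | u(B)−u(C)) · (A−B | B−C)⁻¹ is the affine interpolation gradient. -/

import Mathlib

/-- The matrix with columns `v` and `w`. -/
noncomputable def colMat (v w : EuclideanSpace ℝ (Fin 2)) : Matrix (Fin 2) (Fin 2) ℝ :=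
  Matrix.of fun i j => ![v i, w i] j

/-- The affine interpolation gradient determined by the points `x₁, x₂, x₃` and the
values `u₁, u₂, u₃`: `(u₁−u₂ | u₂−u₃) · (x₁−x₂ | x₂−x₃)⁻¹`. -/
noncomputable def gradMat (x₁ x₂ x₃ u₁ u₂ u₃ : EuclideanSpace ℝ (Fin 2)) :
    Matrix (Fin 2) (Fin 2) ℝ :=
  colMat (u₁ - u₂) (u₂ - u₃) * (colMat (x₁ - x₂) (x₂ - x₃))⁻¹

/-- Squared Frobenius norm of a 2×2 matrix. -/
noncomputable def frobSq (M : Matrix (Fin 2) (Fin 2) ℝ) : ℝ :=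
  ∑ i, ∑ j, (M i j) ^ 2

/-- Area of the triangle with vertices `A`, `B`, `C`. -/
noncomputable def triArea (A B C : EuclideanSpace ℝ (Fin 2)) : ℝ :=
  (MeasureTheory.volume (convexHull ℝ {A, B, C})).toReal

/-!
Write `∇u = D X⁻¹` with `X` the edge matrix of the triangle and `D` that of its image under `u`.
Submultiplicativity of the Frobenius norm bounds `‖∇u‖²` by a constant times
`‖D‖² = ‖uA - uB‖² + ‖uB - uC‖²`, and the energy of each spring is at least half the squared length
of its deformed edge minus its squared rest length. Affine independence makes `|T|` positive, so
both constants may be divided by it.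
-/

open Module MeasureTheory

lemma half_sq_sub_sq_le_sub_sq {K : Type*} [Field K] [LinearOrder K] [IsStrictOrderedRing K]
    (x a : K) : x ^ 2 / 2 - a ^ 2 ≤ (x - a) ^ 2 := by
  linarith [sq_nonneg (x - 2 * a)]

section Frobenius

open scoped Matrix.Norms.Frobenius

lemma frobSq_eq_norm_sq (M : Matrix (Fin 2) (Fin 2) ℝ) : frobSq M = ‖M‖ ^ 2 := by
  rw [Matrix.frobenius_norm_def, ← Real.sqrt_eq_rpow, Real.sq_sqrt (by positivity)]
  simp only [frobSq, Real.rpow_two, Real.norm_eq_abs, sq_abs]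

lemma frobSq_mul_le (M N : Matrix (Fin 2) (Fin 2) ℝ) :
    frobSq (M * N) ≤ frobSq M * frobSq N := by
  simp only [frobSq_eq_norm_sq, ← mul_pow]
  gcongr
  exact Matrix.frobenius_norm_mul M N

end Frobenius

lemma frobSq_nonneg (M : Matrix (Fin 2) (Fin 2) ℝ) : 0 ≤ frobSq M := by
  unfold frobSq
  positivity

lemma exists_pos_mul_frobSq_mul_right_le (N : Matrix (Fin 2) (Fin 2) ℝ) :
    ∃ c : ℝ, 0 < c ∧ ∀ M, c * frobSq (M * N) ≤ frobSq M := by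
  have hpos : 0 < 1 + frobSq N := add_pos_of_pos_of_nonneg one_pos (frobSq_nonneg N)
  refine ⟨(1 + frobSq N)⁻¹, inv_pos.2 hpos, fun M => ?_⟩
  rw [inv_mul_le_iff₀ hpos]
  linarith [frobSq_mul_le M N, frobSq_nonneg M]

lemma frobSq_colMat (v w : EuclideanSpace ℝ (Fin 2)) :
    frobSq (colMat v w) = ‖v‖ ^ 2 + ‖w‖ ^ 2 := by
  simp only [frobSq, colMat, Matrix.of_apply, EuclideanSpace.real_norm_sq_eq, Fin.sum_univ_two,
    Matrix.cons_val_zero, Matrix.cons_val_one]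
  ring

lemma measure_convexHull_range_pos {ι E : Type*} [Fintype ι] [NormedAddCommGroup E]
    [NormedSpace ℝ E] [FiniteDimensional ℝ E] [MeasurableSpace E] (μ : Measure E)
    [μ.IsOpenPosMeasure] {p : ι → E} (hp : AffineIndependent ℝ p)
    (hcard : Fintype.card ι = finrank ℝ E + 1) : 0 < μ (convexHull ℝ (Set.range p)) := by
  apply Measure.measure_pos_of_nonempty_interior
  rw [interior_convexHull_nonempty_iff_affineSpan_eq_top]
  exact hp.affineSpan_eq_top_iff_card_eq_finrank_add_one.2 hcard

lemma triArea_pos {A B C : EuclideanSpace ℝ (Fin 2)} (h : AffineIndependent ℝ ![A, B, C]) :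
    0 < triArea A B C := by
  have hbounded : Bornology.IsBounded (convexHull ℝ {A, B, C}) :=
    isBounded_convexHull.2 (Set.toFinite _).isBounded
  have hrange : Set.range ![A, B, C] = {A, B, C} := by
    simp only [Matrix.range_cons, Matrix.range_empty, Set.union_empty, Set.singleton_union]
  have hvolume := measure_convexHull_range_pos volume h (by simp)
  rw [hrange] at hvolume
  exact ENNReal.toReal_pos hvolume.ne' hbounded.measure_lt_top.ne

/-- Lower bound for the spring energy of a triangle: for affinely independent
`A, B, C ∈ ℝ²` there are `c₂, c₃ > 0` depending only on `A, B, C` such that for all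
values `uA, uB, uC ∈ ℝ²`,
`(‖uA−uB‖ − ‖A−B‖)² + (‖uB−uC‖ − ‖B−C‖)² ≥ c₂ ‖∇u‖²·|T| − c₃ |T|`. -/
theorem triangle_energy_lower_bound (A B C : EuclideanSpace ℝ (Fin 2))
    (hABC : AffineIndependent ℝ ![A, B, C]) :
    ∃ c₂ c₃ : ℝ, 0 < c₂ ∧ 0 < c₃ ∧
      ∀ uA uB uC : EuclideanSpace ℝ (Fin 2),
        (‖uA - uB‖ - ‖A - B‖) ^ 2 + (‖uB - uC‖ - ‖B - C‖) ^ 2 ≥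
          c₂ * (frobSq (gradMat A B C uA uB uC) * triArea A B C) - c₃ * triArea A B C := by
  obtain ⟨c, hc, hgrad⟩ := exists_pos_mul_frobSq_mul_right_le (colMat (A - B) (B - C))⁻¹
  have harea : 0 < triArea A B C := triArea_pos hABC
  have hAB : 0 < ‖A - B‖ := norm_sub_pos_iff.2 (hABC.injective.ne zero_ne_one)
  refine ⟨c / (2 * triArea A B C), (‖A - B‖ ^ 2 + ‖B - C‖ ^ 2) / triArea A B C,
    by positivity, by positivity, fun uA uB uC => ?_⟩
  have hedges : c * frobSq (gradMat A B C uA uB uC) ≤ ‖uA - uB‖ ^ 2 + ‖uB - uC‖ ^ 2 :=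
    (hgrad _).trans_eq (frobSq_colMat _ _)
  calc c / (2 * triArea A B C) * (frobSq (gradMat A B C uA uB uC) * triArea A B C)
        - (‖A - B‖ ^ 2 + ‖B - C‖ ^ 2) / triArea A B C * triArea A B C
      = c * frobSq (gradMat A B C uA uB uC) / 2 - (‖A - B‖ ^ 2 + ‖B - C‖ ^ 2) := by
        field_simp
    _ ≤ (‖uA - uB‖ ^ 2 + ‖uB - uC‖ ^ 2) / 2 - (‖A - B‖ ^ 2 + ‖B - C‖ ^ 2) := by
        gcongr
    _ = (‖uA - uB‖ ^ 2 / 2 - ‖A - B‖ ^ 2) + (‖uB - uC‖ ^ 2 / 2 - ‖B - C‖ ^ 2) := by ring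
    _ ≤ (‖uA - uB‖ - ‖A - B‖) ^ 2 + (‖uB - uC‖ - ‖B - C‖) ^ 2 :=
        add_le_add (half_sq_sub_sq_le_sub_sq _ _) (half_sq_sub_sq_le_sub_sq _ _)
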